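/- Let p be a prime, l ≥ 1, n = p^l, ζ a primitive n-th root of unity, and χ = 1 − ζ. Then for every integer k with 1 ≤ k ≤ φ(n) and every polynomial f(x) ∈ ℤ[x]: χ^k divides f(ζ) in ℤ[ζ] if and only if f(1) ≡ f^{(1)}(1)/1! ≡ ⋯ ≡ f^{(k−1)}(1)/(k−1)! ≡ 0 (mod p). -/

import Mathlib

open Polynomial

/-!
Put `Φ = cyclotomic (p ^ l) ℤ`. Since `ℤ[ζ] = ℤ[X] / (Φ)`, the power `(1 - ζ) ^ k` divides `f(ζ)`
iff `f ∈ (Φ, (X - 1) ^ k)`. Modulo `p` we have `Φ = (X - 1) ^ φ(p ^ l)`, so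
`Φ = (X - 1) ^ φ(p ^ l) + p * u`, and `Φ(1) = p` forces `u(1) = 1`. Hence `u` is invertible modulo
`(X - 1) ^ k`, and for `k ≤ φ(p ^ l)` we get `(Φ, (X - 1) ^ k) = (p, (X - 1) ^ k)`. Membership in
the latter ideal is read off the Taylor expansion of `f` at `1`.
-/

section SpanPair

variable {R : Type*} [CommRing R]

theorem span_pair_sub_pow_comm (x a b : R) (k : ℕ) :
    Ideal.span {x, (a - b) ^ k} = Ideal.span {x, (b - a) ^ k} := by
  rw [← neg_sub b a]
  rcases k.even_or_odd with hk | hk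
  · rw [hk.neg_pow]
  · rw [hk.neg_pow, Ideal.span_pair_neg]

theorem span_pair_mul_right_of_isCoprime {a u t : R} (h : IsCoprime u t) :
    Ideal.span {a * u, t} = Ideal.span {a, t} := by
  apply le_antisymm
  · rw [Ideal.span_le, Set.pair_subset_iff]
    exact ⟨Ideal.mul_mem_right _ _ (Ideal.subset_span (by simp)), Ideal.subset_span (by simp)⟩
  · obtain ⟨x, y, hxy⟩ := h
    rw [Ideal.span_le, Set.pair_subset_iff]
    refine ⟨Ideal.mem_span_pair.2 ⟨x, a * y, ?_⟩, Ideal.subset_span (by simp)⟩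
    linear_combination a * hxy

theorem span_pair_pow_add_mul_of_isCoprime {a u t : R} {k m : ℕ} (h : IsCoprime u t)
    (hkm : k ≤ m) : Ideal.span {t ^ m + a * u, t ^ k} = Ideal.span {a, t ^ k} := by
  rw [← Nat.sub_add_cancel hkm, pow_add, add_comm, Ideal.span_pair_add_mul_right,
    span_pair_mul_right_of_isCoprime h.pow_right]

end SpanPair

section Taylor

variable {R : Type*} [CommRing R]

theorem isCoprime_X_sub_C_of_isUnit_eval {r : R} {u : R[X]} (h : IsUnit (u.eval r)) :
    IsCoprime u (X - C r) := by
  obtain ⟨q, hq⟩ := X_sub_C_dvd_sub_C_eval (a := r) (p := u)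
  rw [sub_eq_iff_eq_add'.1 hq, IsCoprime.add_mul_left_left_iff]
  exact isCoprime_one_left.of_isCoprime_of_dvd_left (h.map C).dvd

theorem mem_span_C_X_sub_C_pow_iff {a r : R} {k : ℕ} {f : R[X]} :
    f ∈ Ideal.span {C a, (X - C r) ^ k} ↔ ∀ j < k, a ∣ (taylor r f).coeff j := by
  constructor
  · intro hf j hj
    obtain ⟨g, h, rfl⟩ := Ideal.mem_span_pair.1 hf
    have hX : taylor r (X - C r) = X := by simp
    rw [map_add, taylor_mul, taylor_mul, taylor_pow, hX, taylor_C, coeff_add, coeff_mul_C,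
      coeff_mul_X_pow', if_neg hj.not_ge, add_zero]
    exact dvd_mul_left a _
  · intro hf
    rw [← sum_taylor_eq f r]
    refine Ideal.sum_mem _ fun j _ ↦ ?_
    rcases lt_or_ge j k with hj | hj
    · exact Ideal.mem_of_dvd _ ((map_dvd C (hf j hj)).mul_right _) (Ideal.subset_span (by simp))
    · exact Ideal.mem_of_dvd _ ((pow_dvd_pow _ hj).mul_left _) (Ideal.subset_span (by simp))

end Taylor

theorem mul_factorial_dvd_eval_iterate_derivative_iff {R : Type*} [CommSemiring R]
    [IsCancelMulZero R] [CharZero R] {a r : R} {j : ℕ} {f : R[X]} :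
    a * (j.factorial : R) ∣ (derivative^[j] f).eval r ↔ a ∣ (taylor r f).coeff j := by
  have hderiv : (derivative^[j] f).eval r = (taylor r f).coeff j * (j.factorial : R) := by
    rw [taylor_coeff, ← factorial_smul_hasseDeriv, LinearMap.smul_apply, eval_smul, nsmul_eq_mul,
      mul_comm]
  rw [hderiv]
  exact mul_dvd_mul_iff_right (Nat.cast_ne_zero.2 j.factorial_ne_zero)

theorem exists_mem_adjoin_aeval_eq_mul_iff {A B : Type*} [CommRing A] [Ring B] [Algebra A B]
    {α : B} {m : A[X]} (hm : ∀ q : A[X], aeval α q = 0 ↔ m ∣ q) {f g : A[X]} :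
    (∃ w ∈ Algebra.adjoin A {α}, aeval α f = aeval α g * w) ↔ f ∈ Ideal.span {m, g} := by
  simp only [Algebra.adjoin_singleton_eq_range_aeval, AlgHom.mem_range, exists_exists_eq_and,
    ← map_mul, ← sub_eq_zero (a := aeval α f), ← map_sub, hm, Ideal.mem_span_pair]
  constructor
  · rintro ⟨q, c, hc⟩
    exact ⟨c, q, by linear_combination -hc⟩
  · rintro ⟨c, q, rfl⟩
    exact ⟨q, c, by ring⟩

section Cyclotomic

theorem aeval_eq_zero_iff_cyclotomic_dvd {R : Type*} [CommRing R] [IsDomain R] [CharZero R]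
    {n : ℕ} (hn : 0 < n) {ζ : R} (hζ : IsPrimitiveRoot ζ n) (f : ℤ[X]) :
    aeval ζ f = 0 ↔ cyclotomic n ℤ ∣ f := by
  have hint : IsIntegral ℤ ζ := hζ.isIntegral hn
  have hroot : aeval ζ (cyclotomic n ℤ) = 0 := by
    rw [aeval_def, ← eval_map, map_cyclotomic]
    exact hζ.isRoot_cyclotomic hn
  have hassoc : Associated (minpoly ℤ ζ) (cyclotomic n ℤ) :=
    (minpoly.irreducible hint).associated_of_dvd (cyclotomic.irreducible hn)
      (minpoly.isIntegrallyClosed_dvd hint hroot)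
  rw [minpoly.isIntegrallyClosed_dvd_iff hint, hassoc.dvd_iff_dvd_left]

variable {p l : ℕ} [Fact p.Prime]

theorem cyclotomic_prime_pow_eq_X_sub_one_pow (R : Type*) [Ring R] [CharP R p] (hl : 0 < l) :
    cyclotomic (p ^ l) R = (X - 1) ^ (p ^ l).totient := by
  have hp : p.Prime := Fact.out
  have h := cyclotomic_mul_prime_pow_eq R (p := p) hp.not_dvd_one hl
  rw [mul_one, cyclotomic_one] at h
  obtain ⟨m, rfl⟩ := Nat.exists_eq_succ_of_ne_zero hl.ne'
  rw [h, Nat.totient_prime_pow_succ hp, Nat.succ_sub_one, pow_succ, Nat.mul_sub_one]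

theorem exists_cyclotomic_prime_pow_eq_X_sub_one_pow_add (hl : 0 < l) :
    ∃ u : ℤ[X], cyclotomic (p ^ l) ℤ = (X - 1) ^ (p ^ l).totient + C (p : ℤ) * u ∧
      u.eval 1 = 1 := by
  have hp : p.Prime := Fact.out
  have hdvd : C (p : ℤ) ∣ cyclotomic (p ^ l) ℤ - (X - 1) ^ (p ^ l).totient := by
    rw [C_dvd_iff_dvd_coeff]
    intro i
    rw [← ZMod.intCast_zmod_eq_zero_iff_dvd, ← eq_intCast (Int.castRingHom (ZMod p)), ← coeff_map]
    simp [cyclotomic_prime_pow_eq_X_sub_one_pow (ZMod p) hl]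
  obtain ⟨u, hu⟩ := hdvd
  refine ⟨u, sub_eq_iff_eq_add'.1 hu, ?_⟩
  have hΦ : eval 1 (cyclotomic (p ^ l) ℤ) = p := by
    obtain ⟨m, rfl⟩ := Nat.exists_eq_add_of_lt hl
    simp
  have htot : (p ^ l).totient ≠ 0 := (Nat.totient_pos.2 (pow_pos hp.pos l)).ne'
  have heval := congrArg (eval 1) hu
  simpa [hΦ, htot, hp.ne_zero, eq_comm] using heval

theorem span_cyclotomic_prime_pow_X_sub_one_pow (hl : 0 < l) {k : ℕ}
    (hk : k ≤ (p ^ l).totient) :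
    Ideal.span {cyclotomic (p ^ l) ℤ, (X - 1) ^ k} = Ideal.span {C (p : ℤ), (X - 1) ^ k} := by
  obtain ⟨u, hΦ, hu⟩ := exists_cyclotomic_prime_pow_eq_X_sub_one_pow_add (p := p) hl
  have hcop : IsCoprime u (X - 1) := by
    simpa using isCoprime_X_sub_C_of_isUnit_eval (u := u) (r := 1) (by simp [hu])
  rw [hΦ, span_pair_pow_add_mul_of_isCoprime hcop hk]

end Cyclotomic

theorem chi_pow_dvd_iff_iterate_derivative_modEq_zero_general {R : Type*} [CommRing R] [IsDomain R]
    [CharZero R] {p : ℕ} (hp : p.Prime) {l : ℕ} (hl : 0 < l) {ζ : R}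
    (hζ : IsPrimitiveRoot ζ (p ^ l)) {k : ℕ} (hk : k ≤ (p ^ l).totient) (f : ℤ[X]) :
    (∃ w ∈ Subring.closure {ζ}, aeval ζ f = (1 - ζ) ^ k * w) ↔
      ∀ j < k, (p : ℤ) * (j.factorial : ℤ) ∣ (derivative^[j] f).eval 1 := by
  have : Fact p.Prime := ⟨hp⟩
  have hker := aeval_eq_zero_iff_cyclotomic_dvd (pow_pos hp.pos l) hζ
  calc (∃ w ∈ Subring.closure {ζ}, aeval ζ f = (1 - ζ) ^ k * w)
      ↔ ∃ w ∈ Algebra.adjoin ℤ {ζ}, aeval ζ f = aeval ζ ((1 - X : ℤ[X]) ^ k) * w := by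
        simp [Algebra.adjoin_int]
    _ ↔ f ∈ Ideal.span {cyclotomic (p ^ l) ℤ, (1 - X) ^ k} :=
        exists_mem_adjoin_aeval_eq_mul_iff hker
    _ ↔ f ∈ Ideal.span {C (p : ℤ), (X - C 1) ^ k} := by
        rw [span_pair_sub_pow_comm, span_cyclotomic_prime_pow_X_sub_one_pow hl hk, C_1]
    _ ↔ ∀ j < k, (p : ℤ) ∣ (taylor 1 f).coeff j := mem_span_C_X_sub_C_pow_iff
    _ ↔ ∀ j < k, (p : ℤ) * (j.factorial : ℤ) ∣ (derivative^[j] f).eval 1 := by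
        simp only [mul_factorial_dvd_eval_iterate_derivative_iff]

/-- Let `p` be a prime, `l ≥ 1`, `n = p^l`, `ζ` a primitive `n`-th root
of unity and `χ = 1 − ζ`. For every `1 ≤ k ≤ φ(n)` and every `f ∈ ℤ[x]`:
`χ^k` divides `f(ζ)` in `ℤ[ζ]` iff `f^{(j)}(1)/j! ≡ 0 (mod p)` for all `0 ≤ j ≤ k−1`
(equivalently, `p * j!` divides `f^{(j)}(1)` for all `j < k`). -/
theorem chi_pow_dvd_iff_iterate_derivative_modEq_zero
    (p : ℕ) (hp : p.Prime) (l : ℕ) (hl : 1 ≤ l) (ζ : ℂ)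
    (hζ : IsPrimitiveRoot ζ (p ^ l)) (k : ℕ) (hk1 : 1 ≤ k)
    (hk2 : k ≤ Nat.totient (p ^ l)) (f : Polynomial ℤ) :
    (∃ w ∈ Subring.closure ({ζ} : Set ℂ),
        Polynomial.aeval ζ f = (1 - ζ) ^ k * w) ↔
      (∀ j < k, ((p : ℤ) * (Nat.factorial j : ℤ)) ∣
        (Polynomial.derivative^[j] f).eval 1) :=
  chi_pow_dvd_iff_iterate_derivative_modEq_zero_general hp hl hζ hk2 f
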